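/- arXiv:2504.12776 — 2 statements merged into one kernel-verified Lean document; each statement's English description precedes it below -/
import Mathlib

section
/- For every bin assignment b and every pair of distinct curves i ≠ j, the minimum of cross(Λ,i,j) over all layouts Λ compatible with b equals alt(i,j). -/
open Finset

/-- `Compatible b L` : the layout `L` respects the bin assignment `b`. -/
def Compatible {m n : ℕ} (b : Fin m → Fin n → ℕ) (L : Fin n → Equiv.Perm (Fin m)) : Prop :=
  ∀ i j : Fin m, ∀ k : Fin n, b i k < b j k → L k i < L k j

/-- Curves `i` and `j` cross between elements `k` and `k+1`. -/
def CrossAt {m n : ℕ} (L : Fin n → Equiv.Perm (Fin m)) (i j : Fin m) (k : Fin n) : Prop :=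
  ∃ h : (k : ℕ) + 1 < n,
    (L k i < L k j ∧ L ⟨(k : ℕ) + 1, h⟩ j < L ⟨(k : ℕ) + 1, h⟩ i) ∨
    (L k j < L k i ∧ L ⟨(k : ℕ) + 1, h⟩ i < L ⟨(k : ℕ) + 1, h⟩ j)

instance {m n : ℕ} (L : Fin n → Equiv.Perm (Fin m)) (i j : Fin m) :
    DecidablePred (CrossAt L i j) := fun k => by unfold CrossAt; infer_instance

/-- Number of crossings of curves `i` and `j` in layout `L`. -/
def crossCount {m n : ℕ} (L : Fin n → Equiv.Perm (Fin m)) (i j : Fin m) : ℕ :=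
  (univ.filter (CrossAt L i j)).card

/-- Alternation pairs of curves `i` and `j` under bin assignment `b`. -/
def AltPair {m n : ℕ} (b : Fin m → Fin n → ℕ) (i j : Fin m) (p : Fin n × Fin n) : Prop :=
  p.1 < p.2 ∧ (∀ t : Fin n, p.1 < t → t < p.2 → b i t = b j t) ∧
    ((b i p.1 < b j p.1 ∧ b j p.2 < b i p.2) ∨ (b j p.1 < b i p.1 ∧ b i p.2 < b j p.2))

instance {m n : ℕ} (b : Fin m → Fin n → ℕ) (i j : Fin m) :
    DecidablePred (AltPair b i j) := fun p => by unfold AltPair; infer_instance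

/-- Alternation number of curves `i` and `j`. -/
def altCount {m n : ℕ} (b : Fin m → Fin n → ℕ) (i j : Fin m) : ℕ :=
  (univ.filter (AltPair b i j)).card

/-- Total crossing number of layout `L` (sum over unordered pairs of curves). -/
def totalCross {m n : ℕ} (L : Fin n → Equiv.Perm (Fin m)) : ℕ :=
  ∑ p ∈ univ.filter (fun p : Fin m × Fin m => p.1 < p.2), crossCount L p.1 p.2

/-- Total wiggle of layout `L`. -/
def totalWiggle {m n : ℕ} (L : Fin n → Equiv.Perm (Fin m)) : ℤ :=
  ∑ k : Fin n, ∑ i : Fin m,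
    if h : (k : ℕ) + 1 < n then
      |((L ⟨(k : ℕ) + 1, h⟩ i : ℕ) : ℤ) - ((L k i : ℕ) : ℤ)| else 0

/-!
A compatible layout cannot avoid a crossing inside the interval of an alternation pair, and the
intervals of distinct alternation pairs are disjoint; this gives the lower bound. For the upper
bound, start from the lexicographic order of the rows of `b` and, for each element `k` in turn,
stably sort the curves by their bins at `k`. Two curves then cross between `k` and `k + 1` only if
their bins at `k + 1` are in the opposite order to those at the last element where they differed;
at the first element where they differ they never cross, since the initial order anticipates it.
This one layout is optimal for all pairs of curves at once.
-/

section LowerBound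

variable {m n : ℕ} {b : Fin m → Fin n → ℕ} {L : Fin n → Equiv.Perm (Fin m)} {i j : Fin m}

theorem crossAt_comm {k : Fin n} : CrossAt L i j k ↔ CrossAt L j i k :=
  exists_congr fun _ => or_comm

theorem exists_crossAt_of_lt_of_gt {p q : Fin n} (hpq : p ≤ q) (hp : L p i < L p j)
    (hq : L q j < L q i) : ∃ k ∈ Set.Ico p q, CrossAt L i j k := by
  obtain ⟨q, hqn⟩ := q
  replace hpq : (p : ℕ) ≤ q := hpq
  induction q, hpq using Nat.le_induction with
  | base => exact absurd hp hq.asymm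
  | succ q hpq ih =>
    let r : Fin n := ⟨q, Nat.lt_of_succ_lt hqn⟩
    have hij : i ≠ j := fun h => hp.ne (congrArg (L p) h)
    rcases ((L r).injective.ne hij).lt_or_gt with hr | hr
    · exact ⟨r, ⟨hpq, Nat.lt_succ_self q⟩, hqn, Or.inl ⟨hr, hq⟩⟩
    · obtain ⟨k, ⟨hpk, hkr⟩, hk⟩ := ih r.isLt hr
      exact ⟨k, ⟨hpk, Nat.lt_succ_of_lt hkr⟩, hk⟩

theorem AltPair.exists_crossAt {p : Fin n × Fin n} (hp : AltPair b i j p) (hL : Compatible b L) :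
    ∃ k ∈ Set.Ico p.1 p.2, CrossAt L i j k := by
  obtain ⟨hlt, -, ⟨h₁, h₂⟩ | ⟨h₁, h₂⟩⟩ := hp
  · exact exists_crossAt_of_lt_of_gt hlt.le (hL _ _ _ h₁) (hL _ _ _ h₂)
  · simp only [crossAt_comm (i := i)]
    exact exists_crossAt_of_lt_of_gt hlt.le (hL _ _ _ h₁) (hL _ _ _ h₂)

theorem AltPair.fst_ne {p : Fin n × Fin n} (hp : AltPair b i j p) : b i p.1 ≠ b j p.1 :=
  hp.2.2.elim (fun h => h.1.ne) fun h => h.1.ne'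

theorem AltPair.snd_ne {p : Fin n × Fin n} (hp : AltPair b i j p) : b i p.2 ≠ b j p.2 :=
  hp.2.2.elim (fun h => h.2.ne') fun h => h.2.ne

theorem AltPair.eq_of_mem {p q : Fin n × Fin n} {k : Fin n} (hp : AltPair b i j p)
    (hq : AltPair b i j q) (hkp : k ∈ Set.Ico p.1 p.2) (hkq : k ∈ Set.Ico q.1 q.2) : p = q := by
  have hpq : p.1 < q.2 := hkp.1.trans_lt hkq.2
  have hqp : q.1 < p.2 := hkq.1.trans_lt hkp.2
  refine Prod.ext (le_antisymm ?_ ?_) (le_antisymm ?_ ?_) <;> refine le_of_not_gt fun h => ?_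
  · exact hp.fst_ne (hq.2.1 _ h hpq)
  · exact hq.fst_ne (hp.2.1 _ h hqp)
  · exact hq.snd_ne (hp.2.1 _ hpq h)
  · exact hp.snd_ne (hq.2.1 _ hqp h)

theorem altCount_le_crossCount (hL : Compatible b L) (i j : Fin m) :
    altCount b i j ≤ crossCount L i j := by
  refine card_le_card_of_forall_subsingleton (fun p k => k ∈ Set.Ico p.1 p.2) ?_ ?_
  · intro p hp
    obtain ⟨k, hkp, hk⟩ := (mem_filter.1 hp).2.exists_crossAt hL
    exact ⟨k, mem_filter.2 ⟨mem_univ k, hk⟩, hkp⟩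
  · rintro k - p ⟨hp, hkp⟩ q ⟨hq, hkq⟩
    exact (mem_filter.1 hp).2.eq_of_mem (mem_filter.1 hq).2 hkp hkq

end LowerBound

section History

variable {ι α : Type*} [LinearOrder ι]

/-- The values of `x` up to position `k`, compared starting from the most recent one: the order
produced by stably sorting by the value at each position in turn, up to `k`. -/
def history (k : ι) (x : ι → α) : Colex (Set.Iic k → α) :=
  toColex ((Set.Iic k).domRestrict x)

theorem history_eq_iff {k : ι} {x y : ι → α} :
    history k x = history k y ↔ ∀ t ≤ k, x t = y t :=
  toColex.injective.eq_iff.trans Set.domRestrict_eq_domRestrict_iff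

theorem history_lt_iff [LT α] {k : ι} {x y : ι → α} :
    history k x < history k y ↔ ∃ t ≤ k, (∀ u, t < u → u ≤ k → x u = y u) ∧ x t < y t := by
  constructor
  · rintro ⟨t, heq, hlt⟩
    exact ⟨t, t.2, fun u htu huk => heq ⟨u, huk⟩ htu, hlt⟩
  · rintro ⟨t, htk, heq, hlt⟩
    exact ⟨⟨t, htk⟩, fun u htu => heq u htu u.2, hlt⟩

variable {k l : ι} {x y : ι → α}

theorem history_eq_iff_of_covBy (hkl : k ⋖ l) :
    history l x = history l y ↔ x l = y l ∧ history k x = history k y := by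
  simp only [history_eq_iff, le_iff_eq_or_lt (b := l), hkl.lt_iff_le_left, forall_eq_or_imp]

theorem history_lt_iff_of_covBy [LT α] (hkl : k ⋖ l) :
    history l x < history l y ↔ x l < y l ∨ x l = y l ∧ history k x < history k y := by
  simp only [history_lt_iff]
  constructor
  · rintro ⟨t, htl, heq, hlt⟩
    rcases htl.eq_or_lt with rfl | htl
    · exact Or.inl hlt
    · exact Or.inr ⟨heq l htl le_rfl, t, hkl.le_of_lt htl,
        fun u htu huk => heq u htu (huk.trans hkl.le), hlt⟩
  · rintro (hlt | ⟨hl, t, htk, heq, hlt⟩)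
    · exact ⟨l, le_rfl, fun u hlu hul => absurd hlu hul.not_gt, hlt⟩
    · refine ⟨t, htk.trans hkl.le, fun u htu hul => ?_, hlt⟩
      rcases hul.eq_or_lt with rfl | hul
      · exact hl
      · exact heq u htu (hkl.le_of_lt hul)

end History

theorem sort_inv_lt_iff {m : ℕ} {α : Type*} [LinearOrder α] {f : Fin m → α}
    (hf : Function.Injective f) {i j : Fin m} :
    (Tuple.sort f)⁻¹ i < (Tuple.sort f)⁻¹ j ↔ f i < f j := by
  have hmono : StrictMono (f ∘ Tuple.sort f) :=
    (Tuple.monotone_sort f).strictMono_of_injective (hf.comp (Tuple.sort f).injective)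
  simpa using (hmono.lt_iff_lt (a := (Tuple.sort f)⁻¹ i) (b := (Tuple.sort f)⁻¹ j)).symm

section UpperBound

variable {m n : ℕ} {b : Fin m → Fin n → ℕ} {i j : Fin m} {k l : Fin n}

/-- The key by which the optimal layout sorts the curves at element `k`: the bins up to `k`,
most recent first, then the whole row of bins in lexicographic order, then the index of the curve,
which makes the key injective. -/
def radixKey (b : Fin m → Fin n → ℕ) (k : Fin n) (i : Fin m) :
    Colex (Set.Iic k → ℕ) ×ₗ Lex (Fin n → ℕ) ×ₗ Fin m :=
  toLex (history k (b i), toLex (toLex (b i), i))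

theorem radixKey_injective (b : Fin m → Fin n → ℕ) (k : Fin n) :
    Function.Injective (radixKey b k) :=
  fun _ _ h => congrArg (fun key => (ofLex (ofLex key).2).2) h

theorem radixKey_lt_of_lt (h : b i k < b j k) : radixKey b k i < radixKey b k j :=
  Prod.Lex.toLex_lt_toLex.2 <| Or.inl <| history_lt_iff.2
    ⟨k, le_rfl, fun _ hku huk => absurd hku huk.not_gt, h⟩

theorem radixKey_lt_iff_of_covBy (hkl : k ⋖ l) :
    radixKey b l i < radixKey b l j ↔
      b i l < b j l ∨ b i l = b j l ∧ radixKey b k i < radixKey b k j := by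
  simp only [radixKey, Prod.Lex.toLex_lt_toLex, history_lt_iff_of_covBy hkl,
    history_eq_iff_of_covBy hkl]
  tauto

theorem exists_altPair_of_radixKey_lt (hkl : k ⋖ l) (hk : radixKey b k i < radixKey b k j)
    (hl : b j l < b i l) : ∃ t, AltPair b i j (t, l) := by
  rcases Prod.Lex.toLex_lt_toLex.1 hk with hhist | ⟨hhist, hrow⟩
  · obtain ⟨t, htk, heq, ht⟩ := history_lt_iff.1 hhist
    exact ⟨t, htk.trans_lt hkl.lt, fun u htu hul => heq u htu (hkl.le_of_lt hul),
      Or.inl ⟨ht, hl⟩⟩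
  · have hrow' : toLex (b j) < toLex (b i) :=
      ⟨l, fun t htl => (history_eq_iff.1 hhist t (hkl.le_of_lt htl)).symm, hl⟩
    exact absurd hrow (Prod.Lex.toLex_lt_toLex.2 (Or.inl hrow')).asymm

/-- The layout that places the curves at each element in the order of their `radixKey`; it minimizes
the crossings of all pairs of curves simultaneously. -/
noncomputable def radixLayout (b : Fin m → Fin n → ℕ) (k : Fin n) : Equiv.Perm (Fin m) :=
  (Tuple.sort (radixKey b k))⁻¹

theorem radixLayout_lt_iff :
    radixLayout b k i < radixLayout b k j ↔ radixKey b k i < radixKey b k j :=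
  sort_inv_lt_iff (radixKey_injective b k)

theorem compatible_radixLayout (b : Fin m → Fin n → ℕ) : Compatible b (radixLayout b) :=
  fun _ _ _ h => radixLayout_lt_iff.2 (radixKey_lt_of_lt h)

theorem altPair_comm {p : Fin n × Fin n} : AltPair b i j p ↔ AltPair b j i p := by
  simp only [AltPair, eq_comm (a := b i _), or_comm]

theorem exists_altPair_of_radixLayout_lt_of_gt (hkl : k ⋖ l)
    (hk : radixLayout b k i < radixLayout b k j) (hl : radixLayout b l j < radixLayout b l i) :
    ∃ t, AltPair b i j (t, l) := by
  rw [radixLayout_lt_iff] at hk hl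
  rcases (radixKey_lt_iff_of_covBy hkl).1 hl with hl | ⟨-, hk'⟩
  · exact exists_altPair_of_radixKey_lt hkl hk hl
  · exact absurd hk hk'.asymm

theorem exists_altPair_of_crossAt_radixLayout (h : CrossAt (radixLayout b) i j k) :
    ∃ p, AltPair b i j p ∧ k ⋖ p.2 := by
  obtain ⟨hk, h⟩ := h
  have hcov : k ⋖ ⟨k + 1, hk⟩ := Fin.covBy_iff.2 (Order.covBy_add_one _)
  rcases h with ⟨hij, hji⟩ | ⟨hji, hij⟩
  · obtain ⟨t, ht⟩ := exists_altPair_of_radixLayout_lt_of_gt hcov hij hji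
    exact ⟨_, ht, hcov⟩
  · obtain ⟨t, ht⟩ := exists_altPair_of_radixLayout_lt_of_gt hcov hji hij
    exact ⟨_, altPair_comm.1 ht, hcov⟩

theorem crossCount_radixLayout_le_altCount (b : Fin m → Fin n → ℕ) (i j : Fin m) :
    crossCount (radixLayout b) i j ≤ altCount b i j := by
  refine card_le_card_of_forall_subsingleton (fun k p => k ⋖ p.2) ?_ ?_
  · intro k hk
    obtain ⟨p, hp, hkp⟩ := exists_altPair_of_crossAt_radixLayout (mem_filter.1 hk).2
    exact ⟨p, mem_filter.2 ⟨mem_univ p, hp⟩, hkp⟩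
  · rintro p - k ⟨-, hk⟩ l ⟨-, hl⟩
    exact hk.unique_left hl

end UpperBound

theorem min_crossCount_eq_alt_general {m n : ℕ} (b : Fin m → Fin n → ℕ) :
    ∃ L₀ : Fin n → Equiv.Perm (Fin m), Compatible b L₀ ∧ ∀ i j : Fin m,
      crossCount L₀ i j = altCount b i j ∧
      IsLeast {c : ℕ | ∃ L : Fin n → Equiv.Perm (Fin m), Compatible b L ∧ crossCount L i j = c}
        (altCount b i j) := by
  have hcompat := compatible_radixLayout b
  refine ⟨radixLayout b, hcompat, fun i j => ?_⟩
  have hcross : crossCount (radixLayout b) i j = altCount b i j :=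
    (crossCount_radixLayout_le_altCount b i j).antisymm (altCount_le_crossCount hcompat i j)
  refine ⟨hcross, ⟨radixLayout b, hcompat, hcross⟩, ?_⟩
  rintro _ ⟨L, hL, rfl⟩
  exact altCount_le_crossCount hL i j

theorem min_crossCount_eq_alt {m n : ℕ} (hm : 0 < m) (hn : 0 < n)
    (b : Fin m → Fin n → ℕ) (i j : Fin m) (hij : i ≠ j) :
    IsLeast {c : ℕ | ∃ L : Fin n → Equiv.Perm (Fin m), Compatible b L ∧ crossCount L i j = c}
      (altCount b i j) := by
  obtain ⟨_, _, hleast⟩ := min_crossCount_eq_alt_general b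
  exact (hleast i j).2
end

section
/- Let b be a bin assignment and let i ≠ j be two curves with identical bin vectors, i.e., b(i,k) = b(j,k) for every element k. Then there exists a layout Λ compatible with b that achieves the minimum total crossing number over all compatible layouts and additionally satisfies λ_k(j) = λ_k(i) + 1 for every element k (the duplicate curve j can be kept directly adjacent to its representative i throughout). -/
open Finset

/-!
In a layout of minimum crossing number let `i` be whichever of the two duplicates takes part in
fewer crossings; their names may be exchanged because they share all bins. Redrawing `j` directly
above `i` keeps every bin constraint, makes `j` cross each remaining curve exactly when `i` does,
and never lets `j` cross `i`. So the crossings of `j` are replaced by at most as many, and the new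
layout is again optimal.
-/

section Sums

variable {ι M : Type*} [Fintype ι] [AddCommMonoid M]

lemma two_nsmul_sum_filter_lt_eq_sum_sum [LinearOrder ι] (X : ι → ι → M)
    (hsymm : ∀ c d, X c d = X d c) (hdiag : ∀ c, X c c = 0) :
    2 • ∑ p ∈ univ.filter (fun p : ι × ι => p.1 < p.2), X p.1 p.2 = ∑ c, ∑ d, X c d := by
  have hlt : ∑ p ∈ univ.filter (fun p : ι × ι => p.1 < p.2), X p.1 p.2
      = ∑ c, ∑ d, if c < d then X c d else 0 := by
    rw [sum_filter, Fintype.sum_prod_type]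
  have hgt : ∑ p ∈ univ.filter (fun p : ι × ι => p.1 < p.2), X p.1 p.2
      = ∑ c, ∑ d, if d < c then X c d else 0 := by
    rw [hlt, sum_comm]
    simp only [hsymm]
  rw [two_nsmul]
  nth_rw 1 [hlt]
  rw [hgt]
  simp only [← sum_add_distrib]
  refine sum_congr rfl fun c _ => sum_congr rfl fun d _ => ?_
  rcases lt_trichotomy c d with h | rfl | h
  · simp [h, h.not_gt]
  · simp [hdiag]
  · simp [h, h.not_gt]

variable [DecidableEq ι]

lemma sum_comp_update_id_add (F : ι → M) (i j : ι) :
    ∑ c, F (Function.update id j i c) + F j = ∑ c, F c + F i := by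
  have hcomp : ∀ c, F (Function.update id j i c) = Function.update F j (F i) c := fun c =>
    congrFun (Function.comp_update F id j i) c
  simp only [hcomp]
  rw [sum_update_of_mem (mem_univ j), ← sum_sdiff (subset_univ {j}) (f := F), sum_singleton]
  abel

lemma sum_sum_comp_update_id_add (X : ι → ι → M) (hsymm : ∀ c d, X c d = X d c)
    (hdiag : ∀ c, X c c = 0) (i j : ι) :
    ∑ c, ∑ d, X (Function.update id j i c) (Function.update id j i d)
        + 2 • (∑ d, X j d + X i j)
      = ∑ c, ∑ d, X c d + 2 • ∑ d, X i d := by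
  let rowSum (c : ι) : M := ∑ d, X c (Function.update id j i d)
  have hrow (c : ι) : rowSum c + X c j = ∑ d, X c d + X c i := sum_comp_update_id_add (X c) i j
  have hrow_i : rowSum i + X i j = ∑ d, X i d := by simpa only [hdiag, add_zero] using hrow i
  have hrow_j : rowSum j = ∑ d, X j d + X i j := by
    simpa only [hdiag, add_zero, hsymm j i] using hrow j
  have hsum : ∑ c, rowSum c + ∑ d, X j d = ∑ c, ∑ d, X c d + ∑ d, X i d := by
    simpa only [sum_add_distrib, hsymm _ j, hsymm _ i] using Fintype.sum_congr _ _ hrow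
  calc ∑ c, rowSum (Function.update id j i c) + 2 • (∑ d, X j d + X i j)
      = ∑ c, rowSum (Function.update id j i c) + rowSum j + (∑ d, X j d + X i j) := by
        rw [hrow_j]
        abel
    _ = ∑ c, rowSum c + rowSum i + (∑ d, X j d + X i j) := by
        rw [sum_comp_update_id_add rowSum i j]
    _ = (∑ c, rowSum c + ∑ d, X j d) + (rowSum i + X i j) := add_add_add_comm _ _ _ _
    _ = ∑ c, ∑ d, X c d + 2 • ∑ d, X i d := by rw [hsum, hrow_i, two_nsmul, add_assoc]

end Sums

section Crossings

variable {m n : ℕ} (L : Fin n → Equiv.Perm (Fin m))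

lemma crossAt_iff (c d : Fin m) (k : Fin n) :
    CrossAt L c d k ↔ ∃ h : (k : ℕ) + 1 < n,
      ¬(L k c < L k d ↔ L ⟨(k : ℕ) + 1, h⟩ c < L ⟨(k : ℕ) + 1, h⟩ d) := by
  rcases eq_or_ne c d with rfl | hcd
  · simp [CrossAt]
  · have hne : ∀ l, L l c ≠ L l d := fun l => (L l).injective.ne hcd
    refine exists_congr fun h => ?_
    have := hne k
    have := hne ⟨(k : ℕ) + 1, h⟩
    lia

lemma crossCount_comm (c d : Fin m) : crossCount L c d = crossCount L d c := by
  have hcomm : ∀ k, CrossAt L c d k ↔ CrossAt L d c k := fun k => exists_congr fun _ => or_comm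
  simp only [crossCount, hcomm]

lemma crossCount_self (c : Fin m) : crossCount L c c = 0 := by
  simp [crossCount, CrossAt]

lemma two_mul_totalCross : 2 * totalCross L = ∑ c, ∑ d, crossCount L c d :=
  two_nsmul_sum_filter_lt_eq_sum_sum _ (crossCount_comm L) (crossCount_self L)

lemma totalCross_mul_perm (σ : Equiv.Perm (Fin m)) :
    totalCross (fun k => L k * σ) = totalCross L := by
  have hcross : ∀ c d, crossCount (fun k => L k * σ) c d = crossCount L (σ c) (σ d) :=
    fun _ _ => rfl
  refine Nat.mul_left_cancel two_pos ?_
  calc 2 * totalCross (fun k => L k * σ)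
      = ∑ c, ∑ d, crossCount L (σ c) (σ d) := by simp only [two_mul_totalCross, hcross]
    _ = ∑ c, ∑ d, crossCount L c d := by
        simp only [Equiv.sum_comp σ (crossCount L _),
          Equiv.sum_comp σ fun c => ∑ d, crossCount L c d]
    _ = 2 * totalCross L := (two_mul_totalCross L).symm

end Crossings

section Compatibility

variable {m n : ℕ} {b : Fin m → Fin n → ℕ} {L : Fin n → Equiv.Perm (Fin m)}

lemma exists_compatible (b : Fin m → Fin n → ℕ) :
    ∃ L : Fin n → Equiv.Perm (Fin m), Compatible b L :=
  ⟨fun k => (Tuple.sort fun c => b c k).symm, fun c d k hlt =>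
    (Tuple.monotone_sort fun c => b c k).reflect_lt (by simpa using hlt)⟩

lemma Compatible.of_comp {L' : Fin n → Equiv.Perm (Fin m)} (hL : Compatible b L)
    (g : Fin m → Fin m) (hg : ∀ c k, b (g c) k = b c k)
    (hlt : ∀ c d k, L k (g c) < L k (g d) → L' k c < L' k d) : Compatible b L' :=
  fun c d k hbin => hlt c d k (hL _ _ k (by rwa [hg, hg]))

lemma Compatible.exists_totalCross_eq_and_sum_crossCount_le (hL : Compatible b L) {i j : Fin m}
    (hdup : ∀ k, b i k = b j k) :
    ∃ L' : Fin n → Equiv.Perm (Fin m), Compatible b L' ∧ totalCross L' = totalCross L ∧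
      ∑ c, crossCount L' i c ≤ ∑ c, crossCount L' j c := by
  rcases le_total (∑ c, crossCount L i c) (∑ c, crossCount L j c) with hle | hle
  · exact ⟨L, hL, rfl, hle⟩
  have hbin : ∀ c k, b (Equiv.swap i j c) k = b c k := by
    intro c k
    rw [Equiv.swap_apply_def]
    split_ifs <;> simp [*]
  have hsum : ∀ a, ∑ c, crossCount (fun k => L k * Equiv.swap i j) a c
      = ∑ c, crossCount L (Equiv.swap i j a) c := fun a =>
    Equiv.sum_comp (Equiv.swap i j) (crossCount L (Equiv.swap i j a))
  refine ⟨fun k => L k * Equiv.swap i j, hL.of_comp _ hbin fun _ _ _ => id,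
    totalCross_mul_perm L _, ?_⟩
  simpa only [hsum, Equiv.swap_apply_left, Equiv.swap_apply_right] using hle

end Compatibility

section Sorting

variable {m : ℕ} {α : Type*} [LinearOrder α]

lemma strictMono_comp_sort {f : Fin m → α} (hf : Function.Injective f) :
    StrictMono (f ∘ Tuple.sort f) :=
  (Tuple.monotone_sort f).strictMono_of_injective (hf.comp (Tuple.sort f).injective)

lemma sort_symm_lt_sort_symm_iff {f : Fin m → α} (hf : Function.Injective f) {c d : Fin m} :
    (Tuple.sort f).symm c < (Tuple.sort f).symm d ↔ f c < f d := by
  simpa using ((strictMono_comp_sort hf).lt_iff_lt (a := (Tuple.sort f).symm c)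
    (b := (Tuple.sort f).symm d)).symm

lemma sort_symm_covBy_sort_symm {f : Fin m → α} (hf : Function.Injective f) {c d : Fin m}
    (hcov : f c ⋖ f d) : (Tuple.sort f).symm c ⋖ (Tuple.sort f).symm d :=
  CovBy.of_image (OrderEmbedding.ofStrictMono _ (strictMono_comp_sort hf)) (by simpa using hcov)

end Sorting

section PlaceAbove

variable {m n : ℕ}

/-- Sort keys for moving curve `j` directly above curve `i` in the vertical order `π`: positions are
doubled to leave a gap above each curve, and `j` is put into the gap above `i`. -/
def aboveKey (π : Equiv.Perm (Fin m)) (i j c : Fin m) : ℕ :=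
  2 * (π (Function.update id j i c) : ℕ) + if c = j then 1 else 0

/-- The vertical order obtained from `π` by moving curve `j` directly above curve `i`. -/
def placeAbove (π : Equiv.Perm (Fin m)) (i j : Fin m) : Equiv.Perm (Fin m) :=
  (Tuple.sort (aboveKey π i j)).symm

lemma aboveKey_injective (π : Equiv.Perm (Fin m)) (i j : Fin m) :
    Function.Injective (aboveKey π i j) := by
  intro c d h
  have hflag : c = j ↔ d = j := by grind [aboveKey]
  by_cases hc : c = j
  · rw [hc, hflag.mp hc]
  · have hd : d ≠ j := hflag.not.mp hc
    refine π.injective (Fin.ext ?_)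
    simpa [aboveKey, hc, hd] using h

lemma placeAbove_lt_placeAbove_iff (π : Equiv.Perm (Fin m)) (i j c d : Fin m) :
    placeAbove π i j c < placeAbove π i j d ↔
      π (Function.update id j i c) < π (Function.update id j i d) ∨
        Function.update id j i c = Function.update id j i d ∧ c ≠ j ∧ d = j := by
  rw [placeAbove, sort_symm_lt_sort_symm_iff (aboveKey_injective π i j), aboveKey, aboveKey,
    ← π.injective.eq_iff (a := Function.update id j i c), Fin.ext_iff (a := π _), Fin.lt_def]
  split_ifs <;> lia

lemma val_placeAbove_eq_add_one (π : Equiv.Perm (Fin m)) {i j : Fin m} (hij : i ≠ j) :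
    (placeAbove π i j j : ℕ) = placeAbove π i j i + 1 := by
  have hkey : aboveKey π i j i ⋖ aboveKey π i j j := by
    simp [aboveKey, hij]
  have hcov : placeAbove π i j i ⋖ placeAbove π i j j :=
    sort_symm_covBy_sort_symm (aboveKey_injective π i j) hkey
  exact (Nat.covBy_iff_add_one_eq.mp (Fin.covBy_iff.mp hcov)).symm

lemma Compatible.placeAbove {b : Fin m → Fin n → ℕ} {L : Fin n → Equiv.Perm (Fin m)}
    (hL : Compatible b L) {i j : Fin m} (hdup : ∀ k, b i k = b j k) :
    Compatible b (fun k => placeAbove (L k) i j) := by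
  refine hL.of_comp (Function.update id j i) (fun c k => ?_) fun c d k hlt =>
    (placeAbove_lt_placeAbove_iff _ _ _ _ _).mpr (Or.inl hlt)
  rcases eq_or_ne c j with rfl | hc
  · simp [hdup]
  · simp [hc]

variable (L : Fin n → Equiv.Perm (Fin m)) (i j : Fin m)

lemma crossCount_placeAbove (c d : Fin m) :
    crossCount (fun k => placeAbove (L k) i j) c d
      = crossCount L (Function.update id j i c) (Function.update id j i d) := by
  have hcross : ∀ k, CrossAt (fun k => placeAbove (L k) i j) c d k
      ↔ CrossAt L (Function.update id j i c) (Function.update id j i d) k := by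
    intro k
    simp only [crossAt_iff, placeAbove_lt_placeAbove_iff]
    by_cases h : Function.update id j i c = Function.update id j i d <;> simp [h]
  simp only [crossCount, hcross]

lemma totalCross_placeAbove_add :
    totalCross (fun k => placeAbove (L k) i j) + (∑ c, crossCount L j c + crossCount L i j)
      = totalCross L + ∑ c, crossCount L i c := by
  have hsum := sum_sum_comp_update_id_add _ (crossCount_comm L) (crossCount_self L) i j
  have hnew := two_mul_totalCross fun k => placeAbove (L k) i j
  simp only [crossCount_placeAbove] at hnew
  have hold := two_mul_totalCross L
  rw [smul_eq_mul, smul_eq_mul] at hsum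
  lia

end PlaceAbove

theorem optimal_layout_with_adjacent_duplicate {m n : ℕ} (hm : 0 < m) (hn : 0 < n)
    (b : Fin m → Fin n → ℕ) (i j : Fin m) (hij : i ≠ j)
    (hdup : ∀ k : Fin n, b i k = b j k) :
    ∃ L : Fin n → Equiv.Perm (Fin m), Compatible b L ∧
      (∀ L' : Fin n → Equiv.Perm (Fin m), Compatible b L' → totalCross L ≤ totalCross L') ∧
      ∀ k : Fin n, ((L k j : ℕ) = (L k i : ℕ) + 1) := by
  obtain ⟨L, hL, hmin⟩ := Set.exists_min_image
    {L : Fin n → Equiv.Perm (Fin m) | Compatible b L} totalCross (Set.toFinite _)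
    (exists_compatible b)
  obtain ⟨L₀, hL₀, htotal, hle⟩ := hL.exists_totalCross_eq_and_sum_crossCount_le hdup
  refine ⟨fun k => placeAbove (L₀ k) i j, hL₀.placeAbove hdup, fun L' hL' => ?_,
    fun k => val_placeAbove_eq_add_one (L₀ k) hij⟩
  have hplace := totalCross_placeAbove_add L₀ i j
  calc totalCross (fun k => placeAbove (L₀ k) i j)
      ≤ totalCross L₀ := by lia
    _ = totalCross L := htotal
    _ ≤ totalCross L' := hmin L' hL'
end
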